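/- arXiv:2303.06864 — 6 statements merged into one kernel-verified Lean document; each statement's English description precedes it below -/
import Mathlib

section
/- Let G be a finite connected simple graph with at least one vertex in which every two vertices are at distance at most 2 (diameter at most 2). Then χ_ssc(G) equals the domination number γ(G) of G. -/
open SimpleGraph

/-- The closed neighbourhood of `v` in `G`. -/
def closedNbhd {V : Type*} (G : SimpleGraph V) (v : V) : Set V :=
  {u | u = v ∨ G.Adj v u}

/-- `c` is a `q`-subset square colouring of `G`: colours `1, …, q` are real colours and
colour `0` means "uncoloured"; every closed neighbourhood contains a coloured vertex, and
no nonzero colour appears on two distinct vertices of a closed neighbourhood. -/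
def IsSubsetSquareColouring {V : Type*} (G : SimpleGraph V) (q : ℕ) (c : V → ℕ) : Prop :=
  (∀ v, c v ≤ q) ∧
  (∀ v, ∃ u ∈ closedNbhd G v, c u ≠ 0) ∧
  (∀ v i, 1 ≤ i → i ≤ q →
    ∀ u ∈ closedNbhd G v, ∀ w ∈ closedNbhd G v, c u = i → c w = i → u = w)

/-- The subset square chromatic number `χ_ssc G`. -/
noncomputable def sscNum {V : Type*} (G : SimpleGraph V) : ℕ :=
  sInf {q | ∃ c : V → ℕ, IsSubsetSquareColouring G q c}

/-- `D` is a dominating set of `G`. -/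
def IsDominatingSet {V : Type*} (G : SimpleGraph V) (D : Set V) : Prop :=
  ∀ v, ∃ u ∈ D, u ∈ closedNbhd G v

/-- The domination number `γ G`. -/
noncomputable def dominationNumber {V : Type*} [Fintype V] (G : SimpleGraph V) : ℕ :=
  sInf {k | ∃ D : Finset V, D.card = k ∧ IsDominatingSet G ↑D}

/-!
The vertices coloured by a subset square colouring form a dominating set, and colouring the vertices
of a dominating set with distinct colours gives a subset square colouring; the latter shows
`χ_ssc ≤ γ` for every finite graph. In diameter at most 2 any two vertices lie in a common closed
neighbourhood, so no nonzero colour is repeated at all: at most `q` vertices are coloured, and these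
dominate, whence `γ ≤ χ_ssc`.
-/

section

variable {V : Type*} {G : SimpleGraph V}

lemma mem_closedNbhd_self (G : SimpleGraph V) (v : V) : v ∈ closedNbhd G v :=
  Or.inl rfl

lemma exists_mem_closedNbhd_of_dist_le_two {u w : V} (hreach : G.Reachable u w)
    (hdist : G.dist u w ≤ 2) : ∃ v, u ∈ closedNbhd G v ∧ w ∈ closedNbhd G v := by
  obtain ⟨p, hp⟩ := hreach.exists_walk_length_eq_dist
  have hlength : p.length ≤ 2 := hp.trans_le hdist
  match p, hlength with
  | .nil, _ => exact ⟨u, mem_closedNbhd_self G u, mem_closedNbhd_self G u⟩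
  | .cons huw .nil, _ => exact ⟨u, mem_closedNbhd_self G u, Or.inr huw⟩
  | .cons (v := v) huv (.cons hvw .nil), _ => exact ⟨v, Or.inr huv.symm, Or.inr hvw⟩

lemma isDominatingSet_univ (G : SimpleGraph V) : IsDominatingSet G Set.univ :=
  fun v => ⟨v, Set.mem_univ v, mem_closedNbhd_self G v⟩

lemma exists_injOn_support_eq (D : Finset V) :
    ∃ c : V → ℕ, (∀ v, c v ≤ D.card) ∧ Function.support c = D ∧ Set.InjOn c D := by
  classical
  -- `List.idxOf` returns the length of the list on non-members, so these get colour `0`.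
  refine ⟨fun v => D.card - D.toList.idxOf v, fun v => Nat.sub_le _ _, ?_, ?_⟩
  · ext v
    rw [Function.mem_support, Nat.sub_ne_zero_iff_lt, ← D.length_toList, List.idxOf_lt_length_iff,
      Finset.mem_toList, Finset.mem_coe]
  · intro u hu w _ huw
    have idxOf_le (v : V) : D.toList.idxOf v ≤ D.card :=
      D.length_toList ▸ List.idxOf_le_length
    have idxOf_eq : D.toList.idxOf u = D.toList.idxOf w :=
      (tsub_right_inj (idxOf_le u) (idxOf_le w)).mp huw
    exact (List.idxOf_inj (Finset.mem_toList.mpr hu)).mp idxOf_eq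

lemma IsDominatingSet.exists_isSubsetSquareColouring {D : Finset V} (hD : IsDominatingSet G ↑D) :
    ∃ c : V → ℕ, IsSubsetSquareColouring G D.card c := by
  obtain ⟨c, c_le, support_eq, c_injOn⟩ := exists_injOn_support_eq D
  have mem_of_ne_zero {v : V} (hv : c v ≠ 0) : v ∈ (D : Set V) :=
    support_eq ▸ Function.mem_support.mpr hv
  refine ⟨c, c_le, fun v => ?_, ?_⟩
  · obtain ⟨u, hu, huv⟩ := hD v
    exact ⟨u, huv, Function.mem_support.mp (support_eq ▸ hu)⟩
  · rintro v i hi - u - w - rfl hwu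
    have hu : c u ≠ 0 := Nat.one_le_iff_ne_zero.mp hi
    exact c_injOn (mem_of_ne_zero hu) (mem_of_ne_zero (hwu ▸ hu)) hwu.symm

lemma IsDominatingSet.sscNum_le_card {D : Finset V} (hD : IsDominatingSet G ↑D) :
    sscNum G ≤ D.card :=
  Nat.sInf_le hD.exists_isSubsetSquareColouring

lemma IsDominatingSet.exists_isSubsetSquareColouring_sscNum {D : Finset V}
    (hD : IsDominatingSet G ↑D) : ∃ c : V → ℕ, IsSubsetSquareColouring G (sscNum G) c :=
  Nat.sInf_mem (s := {q | ∃ c : V → ℕ, IsSubsetSquareColouring G q c})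
    ⟨D.card, hD.exists_isSubsetSquareColouring⟩

namespace IsSubsetSquareColouring

variable {q : ℕ} {c : V → ℕ}

lemma isDominatingSet_support (hc : IsSubsetSquareColouring G q c) :
    IsDominatingSet G (Function.support c) := fun v =>
  let ⟨u, huv, hu⟩ := hc.2.1 v
  ⟨u, hu, huv⟩

lemma injOn_support (hc : IsSubsetSquareColouring G q c)
    (hcommon : ∀ u w, ∃ v, u ∈ closedNbhd G v ∧ w ∈ closedNbhd G v) :
    Set.InjOn c (Function.support c) := by
  intro u hu w _ huw
  obtain ⟨v, huv, hwv⟩ := hcommon u w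
  exact hc.2.2 v (c u) (Nat.one_le_iff_ne_zero.mpr hu) (hc.1 u) u huv w hwv rfl huw.symm

lemma ncard_support_le (hc : IsSubsetSquareColouring G q c)
    (hcommon : ∀ u w, ∃ v, u ∈ closedNbhd G v ∧ w ∈ closedNbhd G v) :
    (Function.support c).ncard ≤ q := by
  have maps_to : ∀ v ∈ Function.support c, c v ∈ Set.Icc 1 q := fun v hv =>
    ⟨Nat.one_le_iff_ne_zero.mpr hv, hc.1 v⟩
  calc (Function.support c).ncard
      ≤ (Set.Icc 1 q).ncard := Set.ncard_le_ncard_of_injOn c maps_to (hc.injOn_support hcommon)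
    _ = q := by rw [Set.ncard_eq_toFinset_card', Set.toFinset_Icc, Nat.card_Icc, Nat.add_sub_cancel]

end IsSubsetSquareColouring

variable [Fintype V]

lemma exists_isDominatingSet_card_eq_dominationNumber (G : SimpleGraph V) :
    ∃ D : Finset V, D.card = dominationNumber G ∧ IsDominatingSet G ↑D := by
  have univ_dominates : IsDominatingSet G ↑(Finset.univ : Finset V) :=
    Finset.coe_univ (α := V) ▸ isDominatingSet_univ G
  exact Nat.sInf_mem (s := {k | ∃ D : Finset V, D.card = k ∧ IsDominatingSet G ↑D})
    ⟨_, Finset.univ, rfl, univ_dominates⟩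

lemma IsDominatingSet.dominationNumber_le_ncard {D : Set V} (hD : IsDominatingSet G D) :
    dominationNumber G ≤ D.ncard :=
  Nat.sInf_le ⟨D.toFinite.toFinset, (Set.ncard_eq_toFinset_card D).symm,
    D.toFinite.coe_toFinset.symm ▸ hD⟩

theorem sscNum_le_dominationNumber (G : SimpleGraph V) : sscNum G ≤ dominationNumber G := by
  obtain ⟨D, card_eq, hD⟩ := exists_isDominatingSet_card_eq_dominationNumber G
  exact card_eq ▸ hD.sscNum_le_card

theorem dominationNumber_le_sscNum
    (hcommon : ∀ u w, ∃ v, u ∈ closedNbhd G v ∧ w ∈ closedNbhd G v) :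
    dominationNumber G ≤ sscNum G := by
  obtain ⟨D, -, hD⟩ := exists_isDominatingSet_card_eq_dominationNumber G
  obtain ⟨c, hc⟩ := hD.exists_isSubsetSquareColouring_sscNum
  exact hc.isDominatingSet_support.dominationNumber_le_ncard.trans (hc.ncard_support_le hcommon)

end

theorem stmt1 {V : Type*} [Fintype V] [Nonempty V] (G : SimpleGraph V)
    (hconn : G.Connected) (hdiam : ∀ u v : V, G.dist u v ≤ 2) :
    sscNum G = dominationNumber G :=
  le_antisymm (sscNum_le_dominationNumber G) <| dominationNumber_le_sscNum fun u w =>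
    exists_mem_closedNbhd_of_dist_le_two (hconn u w) (hdiam u w)
end

section
/- Let G be a finite simple graph whose vertex set can be partitioned into t nonempty classes V_1, …, V_t such that any two vertices u, v lying in the same class satisfy N(u) \ {v} = N(v) \ {u} (i.e. they have the same type). Then χ_ssc(G) ≤ t; in other words, the number of colours required to subset square colour G is at most its neighbourhood diversity. -/
open SimpleGraph

/-!
Choose one representative of each class and colour the representatives and the isolated vertices by
the index of their class, leaving every other vertex uncoloured. A vertex `v` with a neighbour `w`
is dominated by the representative of the class of `w`, which has the same type as `w`. Two
representatives with the same colour coincide, so a colour can repeat only at an isolated vertex,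
and an isolated vertex shares no closed neighbourhood with another vertex.
-/

/-- Having the same type: `u` and `v` have the same neighbours apart from each other. Neighbourhood
diversity counts the classes of this relation. -/
def SameType {V : Type*} (G : SimpleGraph V) (u v : V) : Prop :=
  G.neighborSet u \ {v} = G.neighborSet v \ {u}

section

variable {V ι : Type*} {G : SimpleGraph V} {R S : Set V} {u v w : V}

lemma self_mem_closedNbhd : v ∈ closedNbhd G v :=
  Or.inl rfl

lemma closedNbhd_eq_singleton_of_isIsolated (hu : G.IsIsolated u) (huv : u ∈ closedNbhd G v) :
    closedNbhd G v = {u} := by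
  obtain rfl | hadj := huv
  · ext w
    simp [closedNbhd, hu w]
  · exact absurd hadj.symm (hu v)

lemma SameType.mem_closedNbhd_of_adj (hwu : SameType G w u) (hvw : G.Adj v w) :
    u ∈ closedNbhd G v := by
  obtain rfl | hvu := eq_or_ne v u
  · exact self_mem_closedNbhd
  · have hv : v ∈ G.neighborSet u \ {w} := hwu ▸ ⟨hvw.symm, hvu⟩
    exact Or.inr hv.1.symm

lemma closedNbhd_inter_union_isIsolated_nonempty (hR : ∀ w, ∃ r ∈ R, SameType G w r) (v : V) :
    (closedNbhd G v ∩ (R ∪ {u | G.IsIsolated u})).Nonempty := by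
  by_cases hv : G.IsIsolated v
  · exact ⟨v, self_mem_closedNbhd, Or.inr hv⟩
  · obtain ⟨w, hvw⟩ := exists_adj_iff_not_isIsolated.mpr hv
    obtain ⟨r, hrR, hwr⟩ := hR w
    exact ⟨r, hwr.mem_closedNbhd_of_adj hvw, Or.inl hrR⟩

lemma injOn_closedNbhd_inter_union_isIsolated {f : V → ι} (hf : Set.InjOn f R) (v : V) :
    Set.InjOn f (closedNbhd G v ∩ (R ∪ {u | G.IsIsolated u})) := by
  by_cases hiso : ∃ u ∈ closedNbhd G v, G.IsIsolated u
  · obtain ⟨u, huv, hu⟩ := hiso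
    rw [closedNbhd_eq_singleton_of_isIsolated hu huv]
    exact (Set.injOn_singleton f u).mono Set.inter_subset_left
  · exact hf.mono fun u ⟨huv, huS⟩ ↦ huS.resolve_right fun hu ↦ hiso ⟨u, huv, hu⟩

lemma isSubsetSquareColouring_indicator {q : ℕ} {φ : V → Fin q}
    (hdom : ∀ v, (closedNbhd G v ∩ S).Nonempty)
    (hinj : ∀ v, Set.InjOn φ (closedNbhd G v ∩ S)) :
    IsSubsetSquareColouring G q (S.indicator fun v ↦ (φ v : ℕ) + 1) := by
  refine ⟨fun v ↦ ?_, fun v ↦ ?_, ?_⟩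
  · exact Set.indicator_apply_le' (fun _ ↦ (φ v).isLt) fun _ ↦ q.zero_le
  · obtain ⟨u, huv, huS⟩ := hdom v
    exact ⟨u, huv, by simp [huS]⟩
  · rintro v i hi - u huv w hwv rfl hwu
    have huS : u ∈ S := Set.mem_of_indicator_ne_zero (Nat.one_le_iff_ne_zero.mp hi)
    have hwS : w ∈ S := Set.mem_of_indicator_ne_zero (hwu ▸ Nat.one_le_iff_ne_zero.mp hi)
    rw [Set.indicator_of_mem huS, Set.indicator_of_mem hwS, Nat.add_right_cancel_iff] at hwu
    exact hinj v ⟨huv, huS⟩ ⟨hwv, hwS⟩ (Fin.ext hwu.symm)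

lemma exists_isSubsetSquareColouring_card [Finite ι] {f : V → ι}
    (hdom : ∀ v, (closedNbhd G v ∩ S).Nonempty)
    (hinj : ∀ v, Set.InjOn f (closedNbhd G v ∩ S)) :
    ∃ c, IsSubsetSquareColouring G (Nat.card ι) c :=
  ⟨_, isSubsetSquareColouring_indicator hdom fun v ↦
    (Finite.equivFin ι).injective.comp_injOn (hinj v)⟩

end

theorem stmt4_general {V ι : Type*} [Finite ι] (G : SimpleGraph V) (f : V → ι)
    (htype : ∀ u v : V, f u = f v → SameType G u v) :
    sscNum G ≤ Nat.card ι := by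
  obtain ⟨R, hRimage, hRinj⟩ := Set.exists_image_eq_and_injOn Set.univ f
  have hR (w : V) : ∃ r ∈ R, SameType G w r := by
    obtain ⟨r, hrR, hr⟩ : f w ∈ f '' R := hRimage ▸ Set.mem_image_of_mem f (Set.mem_univ w)
    exact ⟨r, hrR, htype w r hr.symm⟩
  exact Nat.sInf_le <| exists_isSubsetSquareColouring_card
    (closedNbhd_inter_union_isIsolated_nonempty hR)
    (injOn_closedNbhd_inter_union_isIsolated hRinj)

theorem stmt4 {V : Type*} [Fintype V] (G : SimpleGraph V) (t : ℕ)
    (f : V → Fin t) (hsurj : Function.Surjective f)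
    (htype : ∀ u v : V, f u = f v →
      G.neighborSet u \ {v} = G.neighborSet v \ {u}) :
    sscNum G ≤ t := by
  simpa using stmt4_general G f htype
end

section
/- Let T be a finite tree (a connected acyclic simple graph) with at least one edge, and let Δ ≥ 1 be its maximum degree. Then Δ colours suffice to subset square colour T, i.e. χ_ssc(T) ≤ Δ. -/
open SimpleGraph

/-!
An injective colouring, where only vertices with a common neighbour must differ, becomes a subset
square colouring once the colours outside a maximal independent set `S` are erased: maximality makes
every closed neighbourhood meet `S`, and independence keeps a vertex of `S` from clashing with its
own neighbours.

A forest whose neighbourhoods each inject into a set of colours has an injective colouring with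
these colours. Root every component and colour from the roots outwards: an injection chosen on the
neighbourhood of `v`, followed by a transposition, agrees at the parent of `v` with the colour
already assigned there.
-/

section

variable {V α : Type*} {G H : SimpleGraph V}

/-- An injective colouring: distinct vertices with a common neighbour get distinct colours.
Adjacent vertices may share a colour. -/
def IsInjectiveColouring (G : SimpleGraph V) (f : V → α) : Prop :=
  ∀ v, Set.InjOn f (G.neighborSet v)

theorem exists_maximal_isIndepSet (G : SimpleGraph V) : ∃ S, Maximal G.IsIndepSet S :=
  zorn_subset {S | G.IsIndepSet S} fun c hc hchain =>
    ⟨⋃₀ c, hchain.pairwise_sUnion.mpr hc, fun _ => Set.subset_sUnion_of_mem⟩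

theorem exists_mem_closedNbhd_of_maximal_isIndepSet {S : Set V} (hS : Maximal G.IsIndepSet S)
    (v : V) : ∃ u ∈ closedNbhd G v, u ∈ S := by
  by_contra! hdisj
  have hinsert : G.IsIndepSet (insert v S) := by
    refine hS.prop.insert fun u hu _ => ?_
    have hvu : ¬ G.Adj v u := fun hadj => hdisj u (Or.inr hadj) hu
    exact ⟨hvu, fun hadj => hvu hadj.symm⟩
  exact hdisj v (Or.inl rfl) (hS.le_of_ge hinsert (Set.subset_insert v S) (Set.mem_insert v S))

theorem IsInjectiveColouring.injOn_closedNbhd_inter {f : V → α} (hf : IsInjectiveColouring G f)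
    {S : Set V} (hS : G.IsIndepSet S) (v : V) : Set.InjOn f (closedNbhd G v ∩ S) := by
  rintro a ⟨ha, haS⟩ b ⟨hb, hbS⟩ hab
  by_contra hne
  rcases ha with rfl | hva
  · exact hS haS hbS hne (hb.resolve_left (Ne.symm hne))
  · rcases hb with rfl | hvb
    · exact hS hbS haS (Ne.symm hne) hva
    · exact hne (hf v hva hvb hab)

theorem IsInjectiveColouring.exists_isSubsetSquareColouring {q : ℕ} {f : V → Fin q}
    (hf : IsInjectiveColouring G f) : ∃ c, IsSubsetSquareColouring G q c := by
  obtain ⟨S, hS⟩ := exists_maximal_isIndepSet G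
  refine ⟨S.indicator fun v => f v + 1, fun v => ?_, fun v => ?_, ?_⟩
  · exact Set.indicator_apply_le' (fun _ => (f v).isLt) fun _ => Nat.zero_le q
  · obtain ⟨u, huv, huS⟩ := exists_mem_closedNbhd_of_maximal_isIndepSet hS v
    exact ⟨u, huv, by simp [huS]⟩
  · intro v i hi _ a ha b hb hca hcb
    have haS : a ∈ S := Set.mem_of_indicator_ne_zero (by rw [hca]; omega)
    have hbS : b ∈ S := Set.mem_of_indicator_ne_zero (by rw [hcb]; omega)
    refine hf.injOn_closedNbhd_inter hS.prop v ⟨ha, haS⟩ ⟨hb, hbS⟩ (Fin.ext ?_)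
    rw [Set.indicator_of_mem haS] at hca
    rw [Set.indicator_of_mem hbS] at hcb
    omega

/-- A choice of root in every component of a forest, recorded by the parent of each vertex and a
depth that drops along every edge towards the parent. `parent v` need not be adjacent to `v`: where
it is not, `v` is a root and the value is junk. -/
structure ForestRooting (G : SimpleGraph V) where
  parent : V → V
  depth : V → ℕ
  depth_parent_le : ∀ v, depth (parent v) ≤ depth v
  parent_eq_or_parent_eq_of_adj : ∀ {u v}, G.Adj u v →
    (parent u = v ∧ depth v < depth u) ∨ (parent v = u ∧ depth u < depth v)

namespace ForestRooting

/-- Restriction of a rooting to a spanning subgraph. A vertex that loses the edge to its parent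
becomes a root. -/
def mono (hGH : G ≤ H) (R : ForestRooting H) : ForestRooting G where
  parent := R.parent
  depth := R.depth
  depth_parent_le := R.depth_parent_le
  parent_eq_or_parent_eq_of_adj hadj := R.parent_eq_or_parent_eq_of_adj (hGH hadj)

theorem nonempty_of_isTree (hG : G.IsTree) : Nonempty (ForestRooting G) := by
  obtain ⟨r⟩ := hG.connected.nonempty
  choose path isPath_path path_unique using hG.existsUnique_path r
  refine ⟨⟨fun v => (path v).penultimate, fun v => (path v).length, fun v => ?_, ?_⟩⟩
  · rw [← path_unique _ _ (isPath_path v).dropLast, Walk.length_dropLast]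
    exact Nat.sub_le _ _
  · intro u v hadj
    have of_mem_support {x y : V} (hxy : G.Adj x y) (hx : x ∈ (path y).support) :
        (path y).penultimate = x ∧ (path x).length < (path y).length := by
      rw [hG.isAcyclic.path_concat (isPath_path x) (isPath_path y) hxy hx]
      simp
    by_cases hu : u ∈ (path v).support
    · exact Or.inr (of_mem_support hadj hu)
    · exact Or.inl (of_mem_support hadj.symm
        (hG.isAcyclic.mem_support_of_ne_mem_support_of_adj_of_isPath
          (isPath_path u) (isPath_path v) hadj hu))

theorem nonempty_of_isAcyclic (hG : G.IsAcyclic) : Nonempty (ForestRooting G) := by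
  cases isEmpty_or_nonempty V
  · exact ⟨⟨id, fun _ => 0, fun _ => le_rfl, fun {u} => isEmptyElim u⟩⟩
  · obtain ⟨T, hGT, -, hT⟩ := connected_top.exists_isTree_le_of_le_of_isAcyclic le_top hG
    exact (nonempty_of_isTree hT).map (mono hGT)

open Classical in
/-- The colouring obtained from local colourings `e v` of the neighbourhoods by working outwards
from the roots: the children of `v` are coloured by `e v` followed by the transposition that takes
`e v` at the parent of `v` to the colour which that parent already has. The final
`e w w` stands for an arbitrary colour. -/
noncomputable def colouring (R : ForestRooting G) (e : V → V → α) (w : V) : α :=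
  if R.depth (R.parent w) < R.depth w then
    Equiv.swap (e (R.parent w) (R.parent (R.parent w)))
      (R.colouring e (R.parent (R.parent w))) (e (R.parent w) w)
  else e w w
termination_by R.depth w
decreasing_by exact (R.depth_parent_le _).trans_lt ‹_›

open Classical in
theorem colouring_of_adj (R : ForestRooting G) (e : V → V → α) {v a : V} (hva : G.Adj v a) :
    R.colouring e a = Equiv.swap (e v (R.parent v)) (R.colouring e (R.parent v)) (e v a) := by
  rcases R.parent_eq_or_parent_eq_of_adj hva with ⟨rfl, -⟩ | ⟨rfl, hdepth⟩
  · rw [Equiv.swap_apply_left]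
  · rw [colouring, if_pos hdepth]

theorem isInjectiveColouring_colouring (R : ForestRooting G) {e : V → V → α}
    (he : ∀ v, Set.InjOn (e v) (G.neighborSet v)) : IsInjectiveColouring G (R.colouring e) := by
  intro v a ha b hb hab
  rw [R.colouring_of_adj e ha, R.colouring_of_adj e hb] at hab
  exact he v ha hb (Equiv.injective _ hab)

end ForestRooting

theorem exists_isInjectiveColouring_of_isAcyclic (hG : G.IsAcyclic)
    (hlocal : ∀ v, ∃ e : V → α, Set.InjOn e (G.neighborSet v)) :
    ∃ f : V → α, IsInjectiveColouring G f := by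
  obtain ⟨R⟩ := ForestRooting.nonempty_of_isAcyclic hG
  choose e he using hlocal
  exact ⟨R.colouring e, R.isInjectiveColouring_colouring he⟩

theorem exists_injOn_neighborSet_of_degree_le {q : ℕ} [NeZero q] {v : V}
    [Fintype (G.neighborSet v)] (hdeg : G.degree v ≤ q) :
    ∃ e : V → Fin q, Set.InjOn e (G.neighborSet v) := by
  obtain ⟨e⟩ : Nonempty (G.neighborSet v ↪ Fin q) := by
    apply Function.Embedding.nonempty_of_card_le
    rwa [card_neighborSet_eq_degree, Fintype.card_fin]
  exact Set.exists_injOn_iff_injective.mpr ⟨e, e.injective⟩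

theorem stmt6_general [G.LocallyFinite] (hG : G.IsAcyclic) {q : ℕ} (hq : 1 ≤ q)
    (hdeg : ∀ v, G.degree v ≤ q) : ∃ c, IsSubsetSquareColouring G q c := by
  have : NeZero q := NeZero.of_pos hq
  obtain ⟨f, hf⟩ := exists_isInjectiveColouring_of_isAcyclic hG
    fun v => exists_injOn_neighborSet_of_degree_le (hdeg v)
  exact hf.exists_isSubsetSquareColouring

end

theorem stmt6 {V : Type*} [Fintype V] (G : SimpleGraph V) [DecidableRel G.Adj]
    (hconn : G.Connected) (hacyc : G.IsAcyclic) (hedge : ∃ u v : V, G.Adj u v)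
    (Δ : ℕ) (hΔ : Δ = G.maxDegree) (h1 : 1 ≤ Δ) :
    sscNum G ≤ Δ := by
  subst hΔ
  exact Nat.sInf_le (stmt6_general hacyc h1 G.degree_le_maxDegree)
end

section
/- Let G be a finite connected bipartite simple graph with bipartition V(G) = A ⊎ B, where A and B are both nonempty, and suppose G admits a strong ordering, i.e. linear orders on A and on B such that for all a, a' ∈ A and b, b' ∈ B with a < a' and b < b', if (a, b') and (a', b) are edges of G then (a, b) and (a', b') are also edges of G. Then χ_ssc(G) ≤ 4. -/
open SimpleGraph

/-!
Choose `S ⊆ A` minimal among the sets containing a neighbour of every non-isolated vertex of `B`.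
By minimality each `u ∈ S` has a private neighbour `p ∈ B`. If `s < u < t` in `S` and `s`, `t` had a
common neighbour `b`, the strong ordering, applied to `b` and `p`, would make `p` adjacent to `s` or
to `t`. Hence two members of `S` with a common neighbour are consecutive in `S`, and colouring `S`
alternately with two colours leaves no conflict. Two further colours serve the same purpose on `B`,
and an isolated vertex may carry any colour itself.
-/

/-- A 2-packing: no two members lie in a common closed neighbourhood, i.e. distinct members are
at distance at least `3`. These are the possible colour classes of a subset square colouring. -/
def IsTwoPacking {V : Type*} (G : SimpleGraph V) (P : Set V) : Prop :=
  ∀ v, (closedNbhd G v ∩ P).Subsingleton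

/-- Total domination of `T` by `S`: every member of `T` has a neighbour in `S`. -/
def TotallyDominates {V : Type*} (G : SimpleGraph V) (S T : Set V) : Prop :=
  ∀ v ∈ T, (G.neighborSet v ∩ S).Nonempty

/-- A strong ordering of the parts `A` and `B`. The linear orders are encoded by maps `f` and `g`
into linear orders, injective on the respective part. -/
structure IsStrongOrdering {V α β : Type*} [LinearOrder α] [LinearOrder β] (G : SimpleGraph V)
    (A B : Set V) (f : V → α) (g : V → β) : Prop where
  injOn_left : Set.InjOn f A
  injOn_right : Set.InjOn g B
  adj_and_adj : ∀ a ∈ A, ∀ a' ∈ A, ∀ b ∈ B, ∀ b' ∈ B,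
    f a < f a' → g b < g b' → G.Adj a b' → G.Adj a' b → G.Adj a b ∧ G.Adj a' b'

section Packing

variable {V : Type*} {G : SimpleGraph V}

theorem IsTwoPacking.union_compl_support {P : Set V} (hP : IsTwoPacking G P) :
    IsTwoPacking G (P ∪ G.supportᶜ) := by
  intro v
  by_cases hv : v ∈ G.support
  · have no_isolated : closedNbhd G v ∩ G.supportᶜ = ∅ := by
      ext u
      simp only [Set.mem_inter_iff, Set.mem_compl_iff, Set.mem_empty_iff_false, iff_false, not_and,
        not_not]
      rintro (rfl | hvu)
      · exact hv
      · exact ⟨v, hvu.symm⟩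
    rw [Set.inter_union_distrib_left, no_isolated, Set.union_empty]
    exact hP v
  · have eq_of_mem {u : V} (hu : u ∈ closedNbhd G v) : u = v :=
      hu.resolve_right fun hvu => hv ⟨u, hvu⟩
    exact fun u hu w hw => (eq_of_mem hu.1).trans (eq_of_mem hw.1).symm

theorem isTwoPacking_of_isBipartiteWith {A B P : Set V} (hG : G.IsBipartiteWith A B) (hPA : P ⊆ A)
    (hP : ∀ b ∈ B, (G.neighborSet b ∩ P).Subsingleton) : IsTwoPacking G P := by
  have not_adj {u w : V} (hu : u ∈ P) (hw : w ∈ P) : ¬G.Adj u w := fun huw =>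
    hG.disjoint.notMem_of_mem_left (hPA hw) (hG.mem_of_mem_adj (hPA hu) huw)
  rintro v u ⟨rfl | hvu, hu⟩ w ⟨rfl | hvw, hw⟩
  · rfl
  · exact (not_adj hu hw hvw).elim
  · exact (not_adj hw hu hvu).elim
  · exact hP v (hG.mem_of_mem_adj (hPA hu) hvu.symm) ⟨hvu, hu⟩ ⟨hvw, hw⟩

open Classical in
theorem exists_isSubsetSquareColouring_of_isTwoPacking {q : ℕ} {P : Fin q → Set V}
    (hP : ∀ i, IsTwoPacking G (P i)) (hcover : ∀ v, ∃ i, (closedNbhd G v ∩ P i).Nonempty) :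
    ∃ c : V → ℕ, IsSubsetSquareColouring G q c := by
  let c : V → ℕ := fun v => if h : ∃ i, v ∈ P i then (h.choose : ℕ) + 1 else 0
  have c_eq {v : V} (h : ∃ i, v ∈ P i) : c v = (h.choose : ℕ) + 1 := dif_pos h
  have exists_mem_of_ne_zero {v : V} (hv : c v ≠ 0) : ∃ i, v ∈ P i :=
    by_contra fun h => hv (dif_neg h)
  refine ⟨c, fun v => ?_, fun v => ?_, fun v i hi _ u hu w hw hui hwi => ?_⟩
  · by_cases h : ∃ i, v ∈ P i
    · exact (c_eq h).trans_le h.choose.isLt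
    · exact (dif_neg h).trans_le q.zero_le
  · obtain ⟨i, u, huv, hui⟩ := hcover v
    exact ⟨u, huv, by rw [c_eq ⟨i, hui⟩]; exact Nat.succ_ne_zero _⟩
  · have hu' := exists_mem_of_ne_zero (v := u) (by omega)
    have hw' := exists_mem_of_ne_zero (v := w) (by omega)
    have same_class : hu'.choose = hw'.choose := by
      have := c_eq hu'
      have := c_eq hw'
      omega
    exact hP _ v ⟨hu, hu'.choose_spec⟩ ⟨hw, same_class ▸ hw'.choose_spec⟩

end Packing

section Domination

variable {V : Type*} {G : SimpleGraph V}

theorem totallyDominates_of_isBipartiteWith {A B : Set V} (hG : G.IsBipartiteWith A B) :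
    TotallyDominates G A (G.support ∩ B) := by
  rintro b ⟨⟨a, hba⟩, hb⟩
  exact ⟨a, hba, hG.symm.mem_of_mem_adj hb hba⟩

theorem TotallyDominates.exists_private_neighbor {S T : Set V}
    (hS : Minimal (TotallyDominates G · T) S) {s : V} (hs : s ∈ S) :
    ∃ p ∈ T, G.neighborSet p ∩ S = {s} := by
  have not_dom : ¬TotallyDominates G (S \ {s}) T :=
    hS.not_prop_of_lt (Set.sdiff_singleton_ssubset.2 hs)
  simp only [TotallyDominates, not_forall, Set.not_nonempty_iff_eq_empty] at not_dom
  obtain ⟨p, hp, hempty⟩ := not_dom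
  refine ⟨p, hp, (hS.prop p hp).subset_singleton_iff.1 ?_⟩
  rwa [← Set.inter_sdiff_assoc, Set.sdiff_eq_empty] at hempty

end Domination

theorem exists_alternating_set {α : Type*} [LinearOrder α] {T : Set α} (hT : T.Finite) :
    ∃ E : Set α, ∀ s ∈ T, ∀ t, s < t → (∀ x ∈ T, s < x → t ≤ x) → (t ∈ E ↔ s ∉ E) := by
  refine ⟨{x | Even (T ∩ Set.Iio x).ncard}, fun s hs t hst hconsec => ?_⟩
  have initial_segment : T ∩ Set.Iio t = insert s (T ∩ Set.Iio s) := by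
    ext x
    simp only [Set.mem_inter_iff, Set.mem_Iio, Set.mem_insert_iff]
    grind
  rw [Set.mem_ofPred_eq, Set.mem_ofPred_eq, initial_segment,
    Set.ncard_insert_of_notMem (by simp) (hT.inter_of_left _), Nat.even_add_one]

section StrongOrdering

variable {V α β : Type*} [LinearOrder α] [LinearOrder β] {G : SimpleGraph V} {A B : Set V}
  {f : V → α} {g : V → β}

namespace IsStrongOrdering

theorem symm (h : IsStrongOrdering G A B f g) : IsStrongOrdering G B A g f where
  injOn_left := h.injOn_right
  injOn_right := h.injOn_left
  adj_and_adj b hb b' hb' a ha a' ha' hbb' haa' hba' hb'a :=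
    (h.adj_and_adj a ha a' ha' b hb b' hb' haa' hbb' hb'a.symm hba'.symm).imp
      SimpleGraph.Adj.symm SimpleGraph.Adj.symm

theorem adj_or_adj_of_lt_of_lt (h : IsStrongOrdering G A B f g) {s u t b p : V} (hs : s ∈ A)
    (hu : u ∈ A) (ht : t ∈ A) (hb : b ∈ B) (hp : p ∈ B) (hsu : f s < f u) (hut : f u < f t)
    (hsb : G.Adj s b) (htb : G.Adj t b) (hup : G.Adj u p) : G.Adj s p ∨ G.Adj t p := by
  rcases lt_trichotomy (g p) (g b) with hpb | hpb | hbp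
  · exact .inl (h.adj_and_adj s hs u hu p hp b hb hsu hpb hsb hup).1
  · exact .inl (h.injOn_right hp hb hpb ▸ hsb)
  · exact .inr (h.adj_and_adj u hu t ht b hb p hp hut hbp hup htb).2

theorem le_of_lt_of_minimal (h : IsStrongOrdering G A B f g) {S T : Set V} (hSA : S ⊆ A)
    (hTB : T ⊆ B) (hS : Minimal (TotallyDominates G · T) S) {b s t u : V} (hb : b ∈ B)
    (hs : s ∈ S) (ht : t ∈ S) (hu : u ∈ S) (hsb : G.Adj s b) (htb : G.Adj t b)
    (hsu : f s < f u) : f t ≤ f u := by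
  by_contra! hut
  obtain ⟨p, hp, hprivate⟩ := TotallyDominates.exists_private_neighbor hS hu
  have eq_of_adj {x : V} (hx : x ∈ S) (hxp : G.Adj x p) : x = u :=
    hprivate.subset ⟨hxp.symm, hx⟩
  have hup : G.Adj u p := (hprivate.superset rfl).1.symm
  rcases h.adj_or_adj_of_lt_of_lt (hSA hs) (hSA hu) (hSA ht) hb (hTB hp) hsu hut hsb htb hup
    with hsp | htp
  · exact hsu.ne (congrArg f (eq_of_adj hs hsp))
  · exact hut.ne' (congrArg f (eq_of_adj ht htp))

theorem exists_isTwoPacking_totallyDominates [Finite V] (h : IsStrongOrdering G A B f g)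
    (hG : G.IsBipartiteWith A B) :
    ∃ P Q : Set V, IsTwoPacking G P ∧ IsTwoPacking G Q ∧
      TotallyDominates G (P ∪ Q) (G.support ∩ B) := by
  obtain ⟨S, hSA, hS⟩ := exists_minimal_le_of_wellFoundedLT
    (TotallyDominates G · (G.support ∩ B)) A (totallyDominates_of_isBipartiteWith hG)
  obtain ⟨E, hE⟩ := exists_alternating_set (S.toFinite.image f)
  have alternate {b s t : V} (hb : b ∈ B) (hs : s ∈ S) (ht : t ∈ S) (hbs : G.Adj b s)
      (hbt : G.Adj b t) (hst : f s < f t) : f t ∈ E ↔ f s ∉ E :=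
    hE _ (Set.mem_image_of_mem f hs) _ hst <|
      Set.forall_mem_image.2 fun _ hu =>
        h.le_of_lt_of_minimal hSA Set.inter_subset_right hS hb hs ht hu hbs.symm hbt.symm
  have packing_of_uniform {P : Set V} (hPS : P ⊆ S)
      (hP : ∀ s ∈ P, ∀ t ∈ P, (f s ∈ E ↔ f t ∈ E)) : IsTwoPacking G P := by
    refine isTwoPacking_of_isBipartiteWith hG (hPS.trans hSA) ?_
    rintro b hb s ⟨hbs, hs⟩ t ⟨hbt, ht⟩
    have same_parity := hP s hs t ht
    rcases lt_trichotomy (f s) (f t) with hst | hst | hts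
    · have := alternate hb (hPS hs) (hPS ht) hbs hbt hst
      tauto
    · exact h.injOn_left (hSA (hPS hs)) (hSA (hPS ht)) hst
    · have := alternate hb (hPS ht) (hPS hs) hbt hbs hts
      tauto
  refine ⟨S ∩ f ⁻¹' E, S \ f ⁻¹' E, packing_of_uniform Set.inter_subset_left ?_,
    packing_of_uniform Set.sdiff_subset ?_, (Set.inter_union_sdiff S _).symm ▸ hS.prop⟩
  · exact fun s hs t ht => iff_of_true hs.2 ht.2
  · exact fun s hs t ht => iff_of_false hs.2 ht.2

theorem exists_isSubsetSquareColouring_four [Finite V] (h : IsStrongOrdering G A B f g)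
    (hG : G.IsBipartiteWith A B) : ∃ c : V → ℕ, IsSubsetSquareColouring G 4 c := by
  obtain ⟨P, Q, hP, hQ, hPQ⟩ := h.exists_isTwoPacking_totallyDominates hG
  obtain ⟨R, S, hR, hS, hRS⟩ := h.symm.exists_isTwoPacking_totallyDominates hG.symm
  refine exists_isSubsetSquareColouring_of_isTwoPacking (P := ![P ∪ G.supportᶜ, Q, R, S]) ?_ ?_
  · simp [Fin.forall_fin_succ, hP.union_compl_support, hQ, hR, hS]
  · intro v
    by_cases hv : v ∈ G.support
    · obtain ⟨u, hvu⟩ := hv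
      rcases hG.mem_of_adj hvu with ⟨hvA, -⟩ | ⟨hvB, -⟩
      · obtain ⟨w, hvw, hw | hw⟩ := hRS v ⟨⟨u, hvu⟩, hvA⟩
        · exact ⟨2, w, .inr hvw, hw⟩
        · exact ⟨3, w, .inr hvw, hw⟩
      · obtain ⟨w, hvw, hw | hw⟩ := hPQ v ⟨⟨u, hvu⟩, hvB⟩
        · exact ⟨0, w, .inr hvw, .inl hw⟩
        · exact ⟨1, w, .inr hvw, hw⟩
    · exact ⟨0, v, .inl rfl, .inr hv⟩

end IsStrongOrdering

theorem stmt9_general [Finite V] (hG : G.IsBipartiteWith A B)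
    (h : IsStrongOrdering G A B f g) : sscNum G ≤ 4 :=
  Nat.sInf_le (h.exists_isSubsetSquareColouring_four hG)

end StrongOrdering

theorem stmt9 {V : Type*} [Fintype V] (G : SimpleGraph V) (hconn : G.Connected)
    (A B : Set V) (hA : A.Nonempty) (hB : B.Nonempty)
    (hpart : ∀ v : V, (v ∈ A ∧ v ∉ B) ∨ (v ∈ B ∧ v ∉ A))
    (hbip : ∀ u v : V, G.Adj u v → (u ∈ A ∧ v ∈ B) ∨ (u ∈ B ∧ v ∈ A))
    (fA fB : V → ℕ) (hfA : Set.InjOn fA A) (hfB : Set.InjOn fB B)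
    (hstrong : ∀ a ∈ A, ∀ a' ∈ A, ∀ b ∈ B, ∀ b' ∈ B,
      fA a < fA a' → fB b < fB b' → G.Adj a b' → G.Adj a' b →
      G.Adj a b ∧ G.Adj a' b') :
    sscNum G ≤ 4 := by
  have hdisj : Disjoint A B :=
    Set.disjoint_left.2 fun v hvA hvB => (hpart v).elim (·.2 hvB) (·.2 hvA)
  exact stmt9_general ⟨hdisj, hbip⟩ ⟨hfA, hfB, hstrong⟩
end

section
/- Let G be a finite tree (caterpillar) containing a path v_1, v_2, …, v_k such that every vertex of G either lies on this path or is adjacent to some vertex of the path. Then χ_ssc(G) ≤ 3. -/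
open SimpleGraph

/-!
In an acyclic graph the path `w` is a shortest walk between its ends, so it meets each sphere around
its starting point `x` at most once. Colour the vertices of `w` by their distance from `x` modulo 3
and leave all other vertices uncoloured. Two members of a closed neighbourhood are at distance at
most 2, so their distances from `x` differ by at most 2; if they have the same colour, these
distances agree, and the two vertices coincide.
-/

section

variable {V : Type*} {G : SimpleGraph V}

theorem length_eq_dist_of_isAcyclic_of_isPath (hG : G.IsAcyclic) {x y : V} {w : G.Walk x y}
    (hw : w.IsPath) : w.length = G.dist x y := by
  obtain ⟨p, hp, hp_length⟩ := w.reachable.exists_path_of_dist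
  have hwp : w = p := congrArg Subtype.val ((hG.subsingleton_path x y).elim ⟨w, hw⟩ ⟨p, hp⟩)
  rw [hwp, hp_length]

theorem getVert_dist_of_length_eq_dist {x y v : V} {w : G.Walk x y}
    (hw : w.length = G.dist x y) (hv : v ∈ w.support) : w.getVert (G.dist x v) = v := by
  classical
  have htake : (w.takeUntil v hv).length = G.dist x v :=
    length_eq_dist_of_subwalk hw (w.isSubwalk_takeUntil hv)
  rw [← htake, Walk.getVert_length_takeUntil]

theorem injOn_dist_support_of_length_eq_dist {x y : V} {w : G.Walk x y}
    (hw : w.length = G.dist x y) : Set.InjOn (G.dist x) {v | v ∈ w.support} :=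
  Set.LeftInvOn.injOn (f₁' := w.getVert) fun _ ↦ getVert_dist_of_length_eq_dist hw

theorem mem_closedNbhd_comm {u v : V} : u ∈ closedNbhd G v ↔ v ∈ closedNbhd G u :=
  or_congr eq_comm (G.adj_comm v u)

theorem dist_le_dist_add_one_of_mem_closedNbhd (x : V) {u v : V} (hu : u ∈ closedNbhd G v) :
    G.dist x u ≤ G.dist x v + 1 := by
  obtain rfl | hvu := hu
  · exact Nat.le_succ _
  · have := hvu.diff_dist_adj (u := x)
    lia

theorem dist_le_dist_add_two_of_mem_closedNbhd (x : V) {u t v : V} (hu : u ∈ closedNbhd G v)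
    (ht : t ∈ closedNbhd G v) : G.dist x u ≤ G.dist x t + 2 :=
  calc G.dist x u
    _ ≤ G.dist x v + 1 := dist_le_dist_add_one_of_mem_closedNbhd x hu
    _ ≤ G.dist x t + 2 := Nat.succ_le_succ <|
      dist_le_dist_add_one_of_mem_closedNbhd x (mem_closedNbhd_comm.mp ht)

/-- The colouring that gives a vertex of `S` one of the colours `1, 2, 3` according to its distance
from `x` modulo 3 and leaves the vertices outside `S` uncoloured. It is a subset square colouring
when `S` is a dominating set meeting each sphere around `x` at most once. -/
noncomputable def distModThreeColouring (G : SimpleGraph V) (x : V) (S : Set V) : V → ℕ :=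
  S.indicator fun v ↦ G.dist x v % 3 + 1

theorem distModThreeColouring_ne_zero_iff (G : SimpleGraph V) (x : V) {S : Set V} {v : V} :
    distModThreeColouring G x S v ≠ 0 ↔ v ∈ S := by
  simp [distModThreeColouring]

theorem distModThreeColouring_of_mem (x : V) {S : Set V} {v : V} (hv : v ∈ S) :
    distModThreeColouring G x S v = G.dist x v % 3 + 1 :=
  Set.indicator_of_mem hv _

theorem distModThreeColouring_le_three (G : SimpleGraph V) (x : V) (S : Set V) (v : V) :
    distModThreeColouring G x S v ≤ 3 :=
  Set.indicator_apply_le' (fun _ ↦ by lia) fun _ ↦ by lia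

theorem isSubsetSquareColouring_distModThreeColouring {x : V} {S : Set V}
    (hinj : S.InjOn (G.dist x)) (hdom : ∀ v, v ∈ S ∨ ∃ z ∈ S, G.Adj z v) :
    IsSubsetSquareColouring G 3 (distModThreeColouring G x S) := by
  refine ⟨distModThreeColouring_le_three G x S, fun v ↦ ?_, ?_⟩
  · obtain hv | ⟨z, hz, hzv⟩ := hdom v
    · exact ⟨v, .inl rfl, (distModThreeColouring_ne_zero_iff G x).mpr hv⟩
    · exact ⟨z, .inr hzv.symm, (distModThreeColouring_ne_zero_iff G x).mpr hz⟩
  · rintro v i hi - u hu t ht hcu hct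
    have huS : u ∈ S := (distModThreeColouring_ne_zero_iff G x).mp (by lia)
    have htS : t ∈ S := (distModThreeColouring_ne_zero_iff G x).mp (by lia)
    rw [distModThreeColouring_of_mem x huS] at hcu
    rw [distModThreeColouring_of_mem x htS] at hct
    have hut := dist_le_dist_add_two_of_mem_closedNbhd x hu ht
    have htu := dist_le_dist_add_two_of_mem_closedNbhd x ht hu
    have hdist : G.dist x u = G.dist x t := by lia
    exact hinj huS htS hdist

theorem stmt10_general {x y : V} (w : G.Walk x y) (hw : w.length = G.dist x y)
    (hdom : ∀ v, v ∈ w.support ∨ ∃ z ∈ w.support, G.Adj z v) : sscNum G ≤ 3 :=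
  Nat.sInf_le ⟨distModThreeColouring G x {v | v ∈ w.support},
    isSubsetSquareColouring_distModThreeColouring (injOn_dist_support_of_length_eq_dist hw) hdom⟩

end

theorem stmt10 {V : Type*} [Fintype V] (G : SimpleGraph V)
    (hconn : G.Connected) (hacyc : G.IsAcyclic)
    {x y : V} (w : G.Walk x y) (hw : w.IsPath)
    (hcov : ∀ u : V, u ∈ w.support ∨ ∃ z ∈ w.support, G.Adj z u) :
    sscNum G ≤ 3 :=
  stmt10_general w (length_eq_dist_of_isAcyclic_of_isPath hacyc hw) hcov
end

section
/- For all integers m, n ≥ 2, the complete bipartite graph K_{m,n} satisfies χ_ssc(K_{m,n}) = 2. -/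
open SimpleGraph

/-!
The support of a subset square colouring is a dominating set, and conversely the vertices of any
dominating set of size at most `q` can be given distinct colours from `1, …, q`. If any two
vertices lie in a common closed neighbourhood, coloured vertices have pairwise distinct colours,
so a `q`-colouring amounts to a dominating set of size at most `q`. Complete bipartite graphs
have this property; one vertex from each side dominates, and no single vertex does once both
sides have at least two vertices.
-/

/-- `S` is a dominating set of `G`: it meets every closed neighbourhood. The notion captures
which vertex sets may carry the nonzero colours; `S` is allowed to be infinite. -/
def IsDominating {V : Type*} (G : SimpleGraph V) (S : Set V) : Prop :=
  ∀ v, ∃ u ∈ closedNbhd G v, u ∈ S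

theorem encard_Icc_one (q : ℕ) : (Set.Icc 1 q).encard = q := by
  simp [Set.encard_eq_coe_toFinset_card]

section ColouringsAndDomination

variable {V : Type*} {G : SimpleGraph V} {S : Set V} {q : ℕ} {c : V → ℕ}

theorem IsDominating.exists_isSubsetSquareColouring (hS : IsDominating G S)
    (hq : S.encard ≤ q) : ∃ c, IsSubsetSquareColouring G q c := by
  obtain ⟨f, hf_maps, hf_inj⟩ : ∃ f : V → ℕ, S ⊆ f ⁻¹' Set.Icc 1 q ∧ S.InjOn f :=
    (Set.finite_of_encard_le_coe hq).exists_injOn_of_encard_le (by rwa [encard_Icc_one])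
  refine ⟨S.indicator f, fun v ↦ ?_, fun v ↦ ?_, fun v i hi _ u _ w _ hu hw ↦ ?_⟩
  · exact Set.indicator_apply_le' (fun hv ↦ (hf_maps hv).2) (fun _ ↦ q.zero_le)
  · obtain ⟨u, huv, hu⟩ := hS v
    refine ⟨u, huv, ?_⟩
    rw [Set.indicator_of_mem hu]
    exact Nat.one_le_iff_ne_zero.mp (hf_maps hu).1
  · have huS : u ∈ S := Set.mem_of_indicator_ne_zero (f := f) (by omega)
    have hwS : w ∈ S := Set.mem_of_indicator_ne_zero (f := f) (by omega)
    rw [Set.indicator_of_mem huS] at hu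
    rw [Set.indicator_of_mem hwS] at hw
    exact hf_inj huS hwS (hu.trans hw.symm)

theorem IsSubsetSquareColouring.isDominating_support (hc : IsSubsetSquareColouring G q c) :
    IsDominating G (Function.support c) :=
  hc.2.1

theorem IsSubsetSquareColouring.injOn_support_s16 (hc : IsSubsetSquareColouring G q c)
    (hG : ∀ u w, ∃ v, u ∈ closedNbhd G v ∧ w ∈ closedNbhd G v) :
    (Function.support c).InjOn c := by
  intro u hu w _ huw
  obtain ⟨v, huv, hwv⟩ := hG u w
  exact hc.2.2 v (c u) (Nat.one_le_iff_ne_zero.mpr hu) (hc.1 u) u huv w hwv rfl huw.symm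

theorem IsSubsetSquareColouring.encard_support_le (hc : IsSubsetSquareColouring G q c)
    (hG : ∀ u w, ∃ v, u ∈ closedNbhd G v ∧ w ∈ closedNbhd G v) :
    (Function.support c).encard ≤ q := by
  have h_maps : Set.MapsTo c (Function.support c) (Set.Icc 1 q) :=
    fun u hu ↦ ⟨Nat.one_le_iff_ne_zero.mpr hu, hc.1 u⟩
  calc (Function.support c).encard
      _ ≤ (Set.Icc 1 q).encard := Set.encard_le_encard_of_injOn h_maps (hc.injOn_support_s16 hG)
      _ = q := encard_Icc_one q

theorem IsDominating.nontrivial [Nonempty V] (hS : IsDominating G S)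
    (hG : ∀ x, ∃ v, x ∉ closedNbhd G v) : S.Nontrivial := by
  obtain ⟨x, -, hx⟩ := hS (Classical.arbitrary V)
  obtain ⟨v, hxv⟩ := hG x
  obtain ⟨y, hyv, hy⟩ := hS v
  exact ⟨x, hx, y, hy, fun hxy ↦ hxv (hxy ▸ hyv)⟩

end ColouringsAndDomination

section CompleteBipartite

variable {α β : Type*}

theorem isDominating_completeBipartiteGraph_pair (a : α) (b : β) :
    IsDominating (completeBipartiteGraph α β) {Sum.inl a, Sum.inr b} := by
  rintro (x | y)
  · exact ⟨Sum.inr b, by simp [closedNbhd], by simp⟩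
  · exact ⟨Sum.inl a, by simp [closedNbhd], by simp⟩

theorem exists_mem_closedNbhd_completeBipartiteGraph [Nonempty α] [Nonempty β] (u w : α ⊕ β) :
    ∃ v, u ∈ closedNbhd (completeBipartiteGraph α β) v ∧
      w ∈ closedNbhd (completeBipartiteGraph α β) v := by
  rcases u with a | b <;> rcases w with a' | b'
  · exact ⟨Sum.inr (Classical.arbitrary β), by simp [closedNbhd]⟩
  · exact ⟨Sum.inl a, by simp [closedNbhd]⟩
  · exact ⟨Sum.inr b, by simp [closedNbhd]⟩
  · exact ⟨Sum.inl (Classical.arbitrary α), by simp [closedNbhd]⟩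

theorem exists_notMem_closedNbhd_completeBipartiteGraph [Nontrivial α] [Nontrivial β]
    (x : α ⊕ β) : ∃ v, x ∉ closedNbhd (completeBipartiteGraph α β) v := by
  rcases x with a | b
  · obtain ⟨a', ha'⟩ := exists_ne a
    exact ⟨Sum.inl a', by simp [closedNbhd, ha'.symm]⟩
  · obtain ⟨b', hb'⟩ := exists_ne b
    exact ⟨Sum.inr b', by simp [closedNbhd, hb'.symm]⟩

end CompleteBipartite

theorem stmt16_general (α β : Type*) [Nontrivial α] [Nontrivial β] :
    sscNum (completeBipartiteGraph α β) = 2 := by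
  refine IsLeast.csInf_eq ⟨?_, ?_⟩
  · obtain ⟨a⟩ : Nonempty α := inferInstance
    obtain ⟨b⟩ : Nonempty β := inferInstance
    exact (isDominating_completeBipartiteGraph_pair a b).exists_isSubsetSquareColouring
      (Set.encard_pair Sum.inl_ne_inr).le
  · rintro q ⟨c, hc⟩
    have h_lower : 1 < (Function.support c).encard := Set.one_lt_encard_iff_nontrivial.mpr
      (hc.isDominating_support.nontrivial exists_notMem_closedNbhd_completeBipartiteGraph)
    have h_upper : (Function.support c).encard ≤ q :=
      hc.encard_support_le exists_mem_closedNbhd_completeBipartiteGraph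
    exact_mod_cast h_lower.trans_le h_upper

theorem stmt16 (m n : ℕ) (hm : 2 ≤ m) (hn : 2 ≤ n) :
    sscNum (completeBipartiteGraph (Fin m) (Fin n)) = 2 := by
  have : Nontrivial (Fin m) := Fin.nontrivial_iff_two_le.mpr hm
  have : Nontrivial (Fin n) := Fin.nontrivial_iff_two_le.mpr hn
  exact stmt16_general (Fin m) (Fin n)
end
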